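/- Fix masses m₁, m₂, m₃ > 0 and μ₁ > 0, and set κ = M_tot/(m₁²(m₂+m₃)²) and, for μ₂ > 0, u(μ₂) = (μ₂/μ₁)/(m₂m₃√(κ/(m₂+m₃))). Then there exist ε > 0 and functions q₁, q₂, q₃, q₄ : (0, ε) → ℝ such that for every μ₂ ∈ (0, ε) the point with positions (q₁(μ₂), q₂(μ₂), q₃(μ₂), q₄(μ₂)) and zero momenta is a critical point of the fully reduced Hamiltonian H with parameters (μ₁, μ₂), and, as μ₂ → 0⁺, the following limits hold: q₁(μ₂)/(κμ₁²u(μ₂)²) → 1, q₄(μ₂)/(κμ₁²) → 1, q₂(μ₂)/(κμ₁²u(μ₂)¹⁰) → (3/2)m₁(m₂−m₃)/(m₂+m₃)², and q₃(μ₂)/(κμ₁²u(μ₂)¹²) → −(3/2)M_tot m₂m₃(m₂−m₃)/(m₂+m₃)⁴. -/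

import Mathlib

noncomputable section

/-- `f(q_i, q_j, L₃) = ((L_d + L_s)²q_i² + (L_d − L_s)²q_j²)/(16A²)`,
with `L_d = √(Δ² − L₃²)`, `L_s = √(Σ² − L₃²)`, `Δ = μ₁ − μ₂`, `Σ = μ₁ + μ₂`. -/
def fred (μ₁ μ₂ A qi qj L₃ : ℝ) : ℝ :=
  let Ld := Real.sqrt ((μ₁ - μ₂) ^ 2 - L₃ ^ 2)
  let Ls := Real.sqrt ((μ₁ + μ₂) ^ 2 - L₃ ^ 2)
  ((Ld + Ls) ^ 2 * qi ^ 2 + (Ld - Ls) ^ 2 * qj ^ 2) / (16 * A ^ 2)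

/-- The fully reduced Hamiltonian of the three-body problem in `ℝ⁴` on the phase space
`ℝ⁴ × ℝ⁴` (positions `q`, momenta `p`). -/
def Hred (ν₁ ν₂ μ₁ μ₂ : ℝ) (V : (Fin 3 → ℝ) → ℝ) (z : (Fin 4 → ℝ) × (Fin 4 → ℝ)) : ℝ :=
  let q := z.1; let p := z.2
  let A := (q 0 * q 3 - q 1 * q 2) / 2
  let L₃ := q 0 * p 1 - q 1 * p 0 + q 2 * p 3 - q 3 * p 2
  (1 / (2 * ν₁)) * (p 0 ^ 2 + p 1 ^ 2 + fred μ₁ μ₂ A (q 2) (q 3) L₃) +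
    (1 / (2 * ν₂)) * (p 2 ^ 2 + p 3 ^ 2 + fred μ₁ μ₂ A (q 0) (q 1) L₃) +
    V ![q 0 ^ 2 + q 1 ^ 2, q 2 ^ 2 + q 3 ^ 2, q 0 * q 2 + q 1 * q 3]

/-- The Newtonian potential of the three-body problem in the translation-reduced
variables: `V(s₁,s₂,s₃) = −m₂m₃/√s₁ − m₃m₁/√(a₂²s₁+s₂+2a₂s₃) − m₁m₂/√(a₃²s₁+s₂−2a₃s₃)`
with `a₂ = m₂/(m₂+m₃)`, `a₃ = m₃/(m₂+m₃)`. -/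
def Vnewt (m₁ m₂ m₃ : ℝ) (s : Fin 3 → ℝ) : ℝ :=
  -(m₂ * m₃ / Real.sqrt (s 0)) -
    m₃ * m₁ / Real.sqrt ((m₂ / (m₂ + m₃)) ^ 2 * s 0 + s 1 + 2 * (m₂ / (m₂ + m₃)) * s 2) -
    m₁ * m₂ / Real.sqrt ((m₃ / (m₂ + m₃)) ^ 2 * s 0 + s 1 - 2 * (m₃ / (m₂ + m₃)) * s 2)

open Filter Topology

/-!
The Hamiltonian is even in the momenta, so at zero momentum only the derivative in the positions
matters, and there `H` is a centrifugal potential plus `V`. A critical point must have vanishing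
centrifugal torque, because `V` is rotation invariant; this leaves the unknowns `q₁`, `q₄` and the
shape parameter `η = q₂ / q₄`, subject to a radial equation for each of the two bodies of the Jacobi
decomposition and one shape equation. Setting `q₁ = σ q₄`, `η = σ ^ 5 ζ` and `σ = ε s`, where `ε` is
a fixed multiple of `(μ₂ / μ₁) ^ 2`, and eliminating `q₄`, turns the equations into a fixed-point
problem for `(s, ζ)` that is smooth in `ε` up to `ε = 0`, where the map is constant. The implicit
function theorem gives the family, and the constant gives the limits.
-/

/-! ### Calculus -/

theorem hasFDerivAt_zero_of_even_right {E F G : Type*} [NormedAddCommGroup E] [NormedSpace ℝ E]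
    [NormedAddCommGroup F] [NormedSpace ℝ F] [NormedAddCommGroup G] [NormedSpace ℝ G]
    {f : E × F → G} {x : E} (hf : DifferentiableAt ℝ f (x, 0))
    (heven : ∀ a b, f (a, -b) = f (a, b)) (hleft : HasFDerivAt (𝕜 := ℝ) (fun a => f (a, 0)) 0 x) :
    HasFDerivAt (𝕜 := ℝ) f 0 (x, 0) := by
  obtain ⟨L, hL⟩ := hf
  have hLleft : L ∘L .inl ℝ E F = 0 :=
    (HasFDerivAt.comp x hL (hasFDerivAt_prodMk_left x 0)).unique hleft
  have hreflect : HasFDerivAt (f ∘ ContinuousLinearMap.prodMap (.id ℝ E) (-.id ℝ F))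
      (L ∘L .prodMap (.id ℝ E) (-.id ℝ F)) (x, 0) :=
    HasFDerivAt.comp (x, 0) (by simpa using! hL) (ContinuousLinearMap.hasFDerivAt _)
  have heq : f ∘ ContinuousLinearMap.prodMap (.id ℝ E) (-.id ℝ F) = f := by
    ext ⟨a, b⟩
    simp [heven]
  rw [heq] at hreflect
  have : IsAddTorsionFree G := .of_isTorsionFree ℝ G
  have hLright (b : F) : L (0, b) = 0 := by
    have hodd : -L (0, b) = L (0, b) := by
      simpa [← map_neg] using DFunLike.congr_fun (hreflect.unique hL) (0, b)
    exact self_eq_neg.mp hodd.symm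
  convert hL
  ext z
  · simpa using (DFunLike.congr_fun hLleft z).symm
  · simp [hLright]

theorem exists_tendsto_fixedPoint_of_contDiffAt {P E : Type*} [NormedAddCommGroup P]
    [NormedSpace ℝ P] [CompleteSpace P] [NormedAddCommGroup E] [NormedSpace ℝ E] [CompleteSpace E]
    {F : P × E → E} {t₀ : P} {v₀ : E} (hF : ContDiffAt ℝ 1 F (t₀, v₀))
    (hconst : ∀ v, F (t₀, v) = v₀) :
    ∃ ψ : P → E, Tendsto ψ (𝓝 t₀) (𝓝 v₀) ∧ ∀ᶠ t in 𝓝 t₀, F (t, ψ t) = ψ t := by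
  obtain ⟨L, hL⟩ : ∃ L, HasStrictFDerivAt F L (t₀, v₀) := ⟨_, hF.hasStrictFDerivAt one_ne_zero⟩
  have hLright : L ∘L .inr ℝ P E = 0 := by
    have h := hL.hasFDerivAt.comp v₀ (hasFDerivAt_prodMk_right t₀ v₀)
    simp only [Function.comp_def, hconst] at h
    exact h.unique (hasFDerivAt_const v₀ v₀)
  have hΦ : HasStrictFDerivAt (fun p => F p - p.2) (L - .snd ℝ P E) (t₀, v₀) :=
    hL.sub hasStrictFDerivAt_snd
  have hinv : ((L - .snd ℝ P E) ∘L .inr ℝ P E).IsInvertible := by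
    rw [ContinuousLinearMap.sub_comp, hLright, zero_sub, ContinuousLinearMap.snd_comp_inr]
    exact ⟨.neg ℝ, rfl⟩
  refine ⟨hΦ.implicitFunctionOfProdDomain hinv, hΦ.tendsto_implicitFunctionOfProdDomain hinv, ?_⟩
  filter_upwards [hΦ.eventually_apply_implicitFunctionOfProdDomain hinv] with t ht
  simpa [hconst, sub_eq_zero] using ht

/-- `f` is differentiable at `x` with partial derivatives `g`. The space `Fin n → ℝ` carries the
supremum norm, so the gradient of inner product spaces is not available. -/
def HasPartialDerivsAt {n : ℕ} (f : (Fin n → ℝ) → ℝ) (g x : Fin n → ℝ) : Prop :=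
  HasFDerivAt f (∑ i, g i • (.proj i : (Fin n → ℝ) →L[ℝ] ℝ)) x

namespace HasPartialDerivsAt

variable {n : ℕ} {f₁ f₂ : (Fin n → ℝ) → ℝ} {g₁ g₂ x : Fin n → ℝ}

theorem of_hasFDerivAt {L : (Fin n → ℝ) →L[ℝ] ℝ} (hf : HasFDerivAt f₁ L x)
    (hL : ∀ v, L v = ∑ i, g₁ i * v i) : HasPartialDerivsAt f₁ g₁ x := by
  refine hf.congr_fderiv (ContinuousLinearMap.ext fun v => ?_)
  simp only [hL, sum_apply, smul_apply, ContinuousLinearMap.proj_apply, smul_eq_mul]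

theorem zero_iff : HasPartialDerivsAt f₁ 0 x ↔ HasFDerivAt (𝕜 := ℝ) f₁ 0 x := by
  simp only [HasPartialDerivsAt, Pi.zero_apply, zero_smul, Finset.sum_const_zero]

theorem add (h₁ : HasPartialDerivsAt f₁ g₁ x) (h₂ : HasPartialDerivsAt f₂ g₂ x) :
    HasPartialDerivsAt (fun y => f₁ y + f₂ y) (g₁ + g₂) x := by
  simpa only [HasPartialDerivsAt, Pi.add_apply, add_smul, Finset.sum_add_distrib]
    using HasFDerivAt.fun_add h₁ h₂

theorem comp {m : ℕ} {f : (Fin m → ℝ) → ℝ} {φ : (Fin n → ℝ) → Fin m → ℝ} {g : Fin m → ℝ}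
    {J : Matrix (Fin m) (Fin n) ℝ} (hf : HasPartialDerivsAt f g (φ x))
    (hφ : ∀ i, HasPartialDerivsAt (fun y => φ y i) (J i) x) :
    HasPartialDerivsAt (fun y => f (φ y)) (Matrix.vecMul g J) x := by
  refine of_hasFDerivAt (HasFDerivAt.comp x hf (hasFDerivAt_pi.mpr hφ)) fun v => ?_
  simp only [ContinuousLinearMap.comp_apply, ContinuousLinearMap.coe_pi', sum_apply, smul_apply,
    ContinuousLinearMap.proj_apply, smul_eq_mul, Matrix.vecMul, dotProduct, Finset.sum_mul,
    Finset.mul_sum, mul_assoc]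
  exact Finset.sum_comm

end HasPartialDerivsAt

/-! ### Relative equilibria of a general potential -/

/-- The rotation invariants `(s₁, s₂, s₃)` of a configuration, on which the potential depends. -/
def rotationInvariants (q : Fin 4 → ℝ) : Fin 3 → ℝ :=
  ![q 0 ^ 2 + q 1 ^ 2, q 2 ^ 2 + q 3 ^ 2, q 0 * q 2 + q 1 * q 3]

/-- The part of the Hamiltonian at zero momentum that comes from the angular momentum. -/
def centrifugalPotential (ν₁ ν₂ μ₁ μ₂ : ℝ) (q : Fin 4 → ℝ) : ℝ :=
  ((μ₁ ^ 2 * q 2 ^ 2 + μ₂ ^ 2 * q 3 ^ 2) / ν₁ + (μ₁ ^ 2 * q 0 ^ 2 + μ₂ ^ 2 * q 1 ^ 2) / ν₂) /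
    (2 * (q 0 * q 3 - q 1 * q 2) ^ 2)

/-- The configurations on which the torque of the centrifugal potential vanishes, which says
`q₃ q₄ / ν₁ + q₁ q₂ / ν₂ = 0`. Here `η = q₂ / q₄` and `l` is the ratio `ν₁ / ν₂`. -/
def torqueFreeConfig (l η q₁ q₄ : ℝ) : Fin 4 → ℝ :=
  ![q₁, η * q₄, -(l * η * q₁), q₄]

theorem Hred_neg_momentum (ν₁ ν₂ μ₁ μ₂ : ℝ) (V : (Fin 3 → ℝ) → ℝ) (q p : Fin 4 → ℝ) :
    Hred ν₁ ν₂ μ₁ μ₂ V (q, -p) = Hred ν₁ ν₂ μ₁ μ₂ V (q, p) := by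
  have hL₃ : q 0 * -p 1 - q 1 * -p 0 + q 2 * -p 3 - q 3 * -p 2 =
    -(q 0 * p 1 - q 1 * p 0 + q 2 * p 3 - q 3 * p 2) := by ring
  simp only [Hred, fred, Pi.neg_apply, neg_sq, hL₃]

theorem Hred_zero_momentum {μ₁ μ₂ : ℝ} (hμ : |μ₂| ≤ μ₁) (ν₁ ν₂ : ℝ) (V : (Fin 3 → ℝ) → ℝ)
    (q : Fin 4 → ℝ) :
    Hred ν₁ ν₂ μ₁ μ₂ V (q, 0) =
      centrifugalPotential ν₁ ν₂ μ₁ μ₂ q + V (rotationInvariants q) := by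
  obtain ⟨hsum, hdiff⟩ := abs_le.mp hμ
  have hLd : √((μ₁ - μ₂) ^ 2) = μ₁ - μ₂ := Real.sqrt_sq (by linarith)
  have hLs : √((μ₁ + μ₂) ^ 2) = μ₁ + μ₂ := Real.sqrt_sq (by linarith)
  simp only [Hred, fred, centrifugalPotential, rotationInvariants, Pi.zero_apply, mul_zero,
    sub_zero, add_zero, zero_add, ne_eq, OfNat.ofNat_ne_zero, not_false_eq_true, zero_pow, hLd, hLs]
  generalize q 0 * q 3 - q 1 * q 2 = D
  ring

theorem hasPartialDerivsAt_rotationInvariants (q : Fin 4 → ℝ) (i : Fin 3) :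
    HasPartialDerivsAt (fun q => rotationInvariants q i)
      (!![2 * q 0, 2 * q 1, 0, 0; 0, 0, 2 * q 2, 2 * q 3; q 2, q 3, q 0, q 1] i) q := by
  have hq (i : Fin 4) : HasFDerivAt (fun q : Fin 4 → ℝ => q i)
      (.proj i : (Fin 4 → ℝ) →L[ℝ] ℝ) q := hasFDerivAt_apply i q
  match i with
  | 0 =>
    refine .of_hasFDerivAt (((hq 0).pow 2).fun_add ((hq 1).pow 2)) fun v => ?_
    simp [Fin.sum_univ_four]
  | 1 =>
    refine .of_hasFDerivAt (((hq 2).pow 2).fun_add ((hq 3).pow 2)) fun v => ?_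
    simp [Fin.sum_univ_four]
  | 2 =>
    refine .of_hasFDerivAt (((hq 0).fun_mul (hq 2)).fun_add ((hq 1).fun_mul (hq 3))) fun v => ?_
    simp only [add_apply, smul_apply, ContinuousLinearMap.proj_apply, smul_eq_mul,
      Fin.sum_univ_four, Matrix.of_apply, Matrix.cons_val]
    ring

theorem HasPartialDerivsAt.comp_rotationInvariants {V : (Fin 3 → ℝ) → ℝ} {g : Fin 3 → ℝ}
    {q : Fin 4 → ℝ} (hV : HasPartialDerivsAt V g (rotationInvariants q)) :
    HasPartialDerivsAt (fun q => V (rotationInvariants q))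
      ![2 * q 0 * g 0 + q 2 * g 2, 2 * q 1 * g 0 + q 3 * g 2,
        2 * q 2 * g 1 + q 0 * g 2, 2 * q 3 * g 1 + q 1 * g 2] q := by
  convert hV.comp (hasPartialDerivsAt_rotationInvariants q) using 1
  funext i
  match i with
  | 0 | 1 | 2 | 3 =>
    simp only [Matrix.vecMul, dotProduct, Fin.sum_univ_three, Matrix.of_apply, Matrix.cons_val]
    ring

theorem differentiableAt_Hred_zero_momentum {μ₁ μ₂ : ℝ} (hμ : |μ₂| < μ₁) (ν₁ ν₂ : ℝ)
    {V : (Fin 3 → ℝ) → ℝ} {q : Fin 4 → ℝ} (hA : q 0 * q 3 - q 1 * q 2 ≠ 0)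
    (hV : DifferentiableAt ℝ (fun q => V (rotationInvariants q)) q) :
    DifferentiableAt ℝ (Hred ν₁ ν₂ μ₁ μ₂ V) (q, 0) := by
  obtain ⟨hsum, hdiff⟩ := abs_lt.mp hμ
  have hsum0 : μ₁ + μ₂ ≠ 0 := by linarith
  have hdiff0 : μ₁ - μ₂ ≠ 0 := by linarith
  have hVinv : DifferentiableAt ℝ
      (fun z : (Fin 4 → ℝ) × (Fin 4 → ℝ) => V (rotationInvariants z.1)) (q, 0) :=
    DifferentiableAt.comp (g := fun q => V (rotationInvariants q)) (q, (0 : Fin 4 → ℝ))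
      hV differentiableAt_fst
  unfold Hred fred
  refine DifferentiableAt.add ?_ hVinv
  fun_prop (disch := simp [hsum0, hdiff0, hA])

theorem hasPartialDerivsAt_centrifugalPotential (ν₁ ν₂ μ₁ μ₂ : ℝ) {q : Fin 4 → ℝ}
    (hA : q 0 * q 3 - q 1 * q 2 ≠ 0) :
    HasPartialDerivsAt (centrifugalPotential ν₁ ν₂ μ₁ μ₂)
      (((q 0 * q 3 - q 1 * q 2) ^ 2)⁻¹ • ![μ₁ ^ 2 * q 0 / ν₂, μ₂ ^ 2 * q 1 / ν₂,
          μ₁ ^ 2 * q 2 / ν₁, μ₂ ^ 2 * q 3 / ν₁] -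
        (2 * centrifugalPotential ν₁ ν₂ μ₁ μ₂ q / (q 0 * q 3 - q 1 * q 2)) •
          ![q 3, -q 2, -q 1, q 0]) q := by
  have hq (i : Fin 4) : HasFDerivAt (fun q : Fin 4 → ℝ => q i)
      (.proj i : (Fin 4 → ℝ) →L[ℝ] ℝ) q := hasFDerivAt_apply i q
  have hnum₁ := (((hq 2).pow 2).const_mul (μ₁ ^ 2)).fun_add
    (((hq 3).pow 2).const_mul (μ₂ ^ 2))
  have hnum₂ := (((hq 0).pow 2).const_mul (μ₁ ^ 2)).fun_add
    (((hq 1).pow 2).const_mul (μ₂ ^ 2))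
  have hden := ((((hq 0).fun_mul (hq 3)).fun_sub ((hq 1).fun_mul (hq 2))).pow 2).const_mul 2
  have hden0 : 2 * (q 0 * q 3 - q 1 * q 2) ^ 2 ≠ 0 := by positivity
  refine .of_hasFDerivAt (((hnum₁.mul_const ν₁⁻¹).fun_add (hnum₂.mul_const ν₂⁻¹)).fun_mul
    ((hasDerivAt_inv hden0).comp_hasFDerivAt q hden)) fun v => ?_
  simp only [add_apply, sub_apply, neg_apply, smul_apply, ContinuousLinearMap.proj_apply,
    Nat.add_one_sub_one, pow_one, nsmul_eq_mul, Nat.cast_ofNat, smul_eq_mul, neg_smul,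
    centrifugalPotential, Fin.sum_univ_four, Pi.sub_apply, Pi.smul_apply, Matrix.cons_val]
  field_simp
  ring

theorem torqueFreeConfig_area (l η q₁ q₄ : ℝ) :
    torqueFreeConfig l η q₁ q₄ 0 * torqueFreeConfig l η q₁ q₄ 3 -
      torqueFreeConfig l η q₁ q₄ 1 * torqueFreeConfig l η q₁ q₄ 2 =
        q₁ * q₄ * (1 + l * η ^ 2) := by
  simp only [torqueFreeConfig, Matrix.cons_val]
  ring

section TorqueFree

variable {ν₁ ν₂ μ₁ μ₂ η q₁ q₄ : ℝ}

theorem torqueFreeConfig_area_ne_zero (hν₁ : 0 < ν₁) (hν₂ : 0 < ν₂) (hq₁ : q₁ ≠ 0)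
    (hq₄ : q₄ ≠ 0) :
    torqueFreeConfig (ν₁ / ν₂) η q₁ q₄ 0 * torqueFreeConfig (ν₁ / ν₂) η q₁ q₄ 3 -
      torqueFreeConfig (ν₁ / ν₂) η q₁ q₄ 1 * torqueFreeConfig (ν₁ / ν₂) η q₁ q₄ 2 ≠ 0 := by
  rw [torqueFreeConfig_area]
  positivity

theorem centrifugalPotential_torqueFreeConfig (hν₁ : 0 < ν₁) (hν₂ : 0 < ν₂) (hq₁ : q₁ ≠ 0)
    (hq₄ : q₄ ≠ 0) :
    centrifugalPotential ν₁ ν₂ μ₁ μ₂ (torqueFreeConfig (ν₁ / ν₂) η q₁ q₄) =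
      (μ₂ ^ 2 / ν₁ / q₁ ^ 2 + μ₁ ^ 2 / ν₂ / q₄ ^ 2) / (2 * (1 + ν₁ / ν₂ * η ^ 2)) := by
  have : 0 < 1 + ν₁ / ν₂ * η ^ 2 := by positivity
  rw [centrifugalPotential, torqueFreeConfig_area]
  simp only [torqueFreeConfig, Matrix.cons_val]
  field_simp
  ring

theorem hasPartialDerivsAt_centrifugalPotential_torqueFreeConfig (hν₁ : 0 < ν₁) (hν₂ : 0 < ν₂)
    (hq₁ : q₁ ≠ 0) (hq₄ : q₄ ≠ 0) :
    HasPartialDerivsAt (centrifugalPotential ν₁ ν₂ μ₁ μ₂)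
      (((1 + ν₁ / ν₂ * η ^ 2) ^ 2)⁻¹ •
        ![-(μ₂ ^ 2 / ν₁ / q₁ ^ 3), -(ν₁ / ν₂ * η * (μ₁ ^ 2 / ν₂ / q₄ ^ 3)),
          η * (μ₂ ^ 2 / ν₁ / q₁ ^ 3), -(μ₁ ^ 2 / ν₂ / q₄ ^ 3)])
      (torqueFreeConfig (ν₁ / ν₂) η q₁ q₄) := by
  have : 0 < 1 + ν₁ / ν₂ * η ^ 2 := by positivity
  convert hasPartialDerivsAt_centrifugalPotential ν₁ ν₂ μ₁ μ₂
    (torqueFreeConfig_area_ne_zero hν₁ hν₂ hq₁ hq₄) using 1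
  rw [centrifugalPotential_torqueFreeConfig hν₁ hν₂ hq₁ hq₄, torqueFreeConfig_area]
  simp only [torqueFreeConfig, Matrix.cons_val]
  funext i
  match i with
  | 0 | 1 | 2 | 3 =>
    simp only [Pi.sub_apply, Pi.smul_apply, smul_eq_mul, Matrix.cons_val]
    field_simp
    ring

theorem fderiv_Hred_torqueFreeConfig_eq_zero {V : (Fin 3 → ℝ) → ℝ} {g : Fin 3 → ℝ} (hν₁ : 0 < ν₁)
    (hν₂ : 0 < ν₂) (hμ : |μ₂| < μ₁) (hq₁ : q₁ ≠ 0) (hq₄ : q₄ ≠ 0)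
    (hV : HasPartialDerivsAt V g (rotationInvariants (torqueFreeConfig (ν₁ / ν₂) η q₁ q₄)))
    (hinner : μ₂ ^ 2 / ν₁ =
      q₁ ^ 4 * (1 + ν₁ / ν₂ * η ^ 2) ^ 2 * (2 * g 0 - ν₁ / ν₂ * η * g 2))
    (houter : μ₁ ^ 2 / ν₂ = q₄ ^ 4 * (1 + ν₁ / ν₂ * η ^ 2) ^ 2 * (2 * g 1 + η * g 2))
    (hshape : g 2 + 2 * η * g 0 = ν₁ / ν₂ * η * (2 * g 1 + η * g 2)) :
    fderiv ℝ (Hred ν₁ ν₂ μ₁ μ₂ V) (torqueFreeConfig (ν₁ / ν₂) η q₁ q₄, 0) = 0 := by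
  refine (hasFDerivAt_zero_of_even_right
    (differentiableAt_Hred_zero_momentum hμ ν₁ ν₂
      (torqueFreeConfig_area_ne_zero hν₁ hν₂ hq₁ hq₄) hV.comp_rotationInvariants.differentiableAt)
    (Hred_neg_momentum ν₁ ν₂ μ₁ μ₂ V) ?_).fderiv
  simp only [Hred_zero_momentum hμ.le]
  rw [← HasPartialDerivsAt.zero_iff]
  convert (hasPartialDerivsAt_centrifugalPotential_torqueFreeConfig hν₁ hν₂ hq₁ hq₄).add
    hV.comp_rotationInvariants using 1
  have hδ : 0 < 1 + ν₁ / ν₂ * η ^ 2 := by positivity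
  have hinner' : ((1 + ν₁ / ν₂ * η ^ 2) ^ 2)⁻¹ * (μ₂ ^ 2 / ν₁ / q₁ ^ 3) =
      q₁ * (2 * g 0 - ν₁ / ν₂ * η * g 2) := by
    rw [hinner]
    generalize 1 + ν₁ / ν₂ * η ^ 2 = δ at *
    field_simp
  have houter' : ((1 + ν₁ / ν₂ * η ^ 2) ^ 2)⁻¹ * (μ₁ ^ 2 / ν₂ / q₄ ^ 3) =
      q₄ * (2 * g 1 + η * g 2) := by
    rw [houter]
    generalize 1 + ν₁ / ν₂ * η ^ 2 = δ at *
    field_simp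
  funext i
  fin_cases i <;> simp only [torqueFreeConfig, Pi.add_apply, Pi.zero_apply, Pi.smul_apply,
    smul_eq_mul, Fin.zero_eta, Fin.mk_one, Fin.reduceFinMk, Matrix.cons_val]
  · linear_combination hinner'
  · linear_combination ν₁ / ν₂ * η * houter' - q₄ * hshape
  · linear_combination -η * hinner' - q₁ * hshape
  · linear_combination houter'

end TorqueFree

/-! ### The Newtonian potential -/

/-- The partial derivatives of `Vnewt` with respect to `(s₁, s₂, s₃)`. -/
def newtonGrad (m₁ m₂ m₃ : ℝ) (s : Fin 3 → ℝ) : Fin 3 → ℝ :=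
  let a₂ := m₂ / (m₂ + m₃)
  let a₃ := m₃ / (m₂ + m₃)
  let r₁₃ := √(a₂ ^ 2 * s 0 + s 1 + 2 * a₂ * s 2)
  let r₁₂ := √(a₃ ^ 2 * s 0 + s 1 - 2 * a₃ * s 2)
  ![(m₂ * m₃ / √(s 0) ^ 3 + m₃ * m₁ * a₂ ^ 2 / r₁₃ ^ 3 + m₁ * m₂ * a₃ ^ 2 / r₁₂ ^ 3) / 2,
    (m₃ * m₁ / r₁₃ ^ 3 + m₁ * m₂ / r₁₂ ^ 3) / 2,
    m₃ * m₁ * a₂ / r₁₃ ^ 3 - m₁ * m₂ * a₃ / r₁₂ ^ 3]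

theorem hasDerivAt_inv_sqrt {x : ℝ} (hx : 0 < x) :
    HasDerivAt (fun x => (√x)⁻¹) (-(2 * √x ^ 3)⁻¹) x := by
  refine ((Real.hasDerivAt_sqrt hx.ne').inv (Real.sqrt_pos.mpr hx).ne').congr_deriv ?_
  field_simp

theorem hasPartialDerivsAt_Vnewt (m₁ : ℝ) {m₂ m₃ : ℝ} {s : Fin 3 → ℝ} (hs : 0 < s 0)
    (h₁₃ : 0 < (m₂ / (m₂ + m₃)) ^ 2 * s 0 + s 1 + 2 * (m₂ / (m₂ + m₃)) * s 2)
    (h₁₂ : 0 < (m₃ / (m₂ + m₃)) ^ 2 * s 0 + s 1 - 2 * (m₃ / (m₂ + m₃)) * s 2) :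
    HasPartialDerivsAt (Vnewt m₁ m₂ m₃) (newtonGrad m₁ m₂ m₃ s) s := by
  have hcoord (i : Fin 3) : HasFDerivAt (fun s : Fin 3 → ℝ => s i)
      (.proj i : (Fin 3 → ℝ) →L[ℝ] ℝ) s := hasFDerivAt_apply i s
  have hd₁₃ := (((hcoord 0).const_mul ((m₂ / (m₂ + m₃)) ^ 2)).fun_add (hcoord 1)).fun_add
    ((hcoord 2).const_mul (2 * (m₂ / (m₂ + m₃))))
  have hd₁₂ := (((hcoord 0).const_mul ((m₃ / (m₂ + m₃)) ^ 2)).fun_add (hcoord 1)).fun_sub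
    ((hcoord 2).const_mul (2 * (m₃ / (m₂ + m₃))))
  have hV₂₃ := ((hasDerivAt_inv_sqrt hs).comp_hasFDerivAt s (hcoord 0)).const_mul (m₂ * m₃)
  have hV₁₃ := ((hasDerivAt_inv_sqrt h₁₃).comp_hasFDerivAt s hd₁₃).const_mul (m₃ * m₁)
  have hV₁₂ := ((hasDerivAt_inv_sqrt h₁₂).comp_hasFDerivAt s hd₁₂).const_mul (m₁ * m₂)
  refine .of_hasFDerivAt ((hV₂₃.fun_neg.fun_sub hV₁₃).fun_sub hV₁₂) fun v => ?_
  simp only [add_apply, sub_apply, neg_apply, smul_apply, ContinuousLinearMap.proj_apply,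
    smul_eq_mul, newtonGrad, Fin.sum_univ_three, Matrix.cons_val]
  ring

theorem newtonGrad_sq_smul (m₁ m₂ m₃ : ℝ) {c : ℝ} (hc : 0 < c) (s : Fin 3 → ℝ) :
    newtonGrad m₁ m₂ m₃ (c ^ 2 • s) = (c ^ 3)⁻¹ • newtonGrad m₁ m₂ m₃ s := by
  have hsqrt (x : ℝ) : √(c ^ 2 * x) = c * √x := by
    rw [Real.sqrt_mul (sq_nonneg c), Real.sqrt_sq hc.le]
  have h₁₃ (a : ℝ) : a ^ 2 * (c ^ 2 * s 0) + c ^ 2 * s 1 + 2 * a * (c ^ 2 * s 2) =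
    c ^ 2 * (a ^ 2 * s 0 + s 1 + 2 * a * s 2) := by ring
  have h₁₂ (a : ℝ) : a ^ 2 * (c ^ 2 * s 0) + c ^ 2 * s 1 - 2 * a * (c ^ 2 * s 2) =
    c ^ 2 * (a ^ 2 * s 0 + s 1 - 2 * a * s 2) := by ring
  simp only [newtonGrad, Pi.smul_apply, smul_eq_mul, h₁₃, h₁₂, hsqrt, mul_pow]
  funext i
  match i with
  | 0 | 1 | 2 =>
    simp only [Pi.smul_apply, smul_eq_mul, Matrix.cons_val]
    ring

theorem rotationInvariants_torqueFreeConfig_mul (l η σ q₄ : ℝ) :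
    rotationInvariants (torqueFreeConfig l η (σ * q₄) q₄) =
      q₄ ^ 2 • rotationInvariants (torqueFreeConfig l η σ 1) := by
  funext i
  match i with
  | 0 | 1 | 2 =>
    simp only [rotationInvariants, torqueFreeConfig, Pi.smul_apply, smul_eq_mul, Matrix.cons_val]
    ring

/-! ### The equations after rescaling -/

section Rescaled

/-- The squared distance from the outer body to the point with coordinate `-a` along the segment
joining the inner pair, for the configuration `torqueFreeConfig l (σ ^ 5 * ζ) σ 1`. -/
def outerDistSq (l a σ ζ : ℝ) : ℝ :=
  a ^ 2 * σ ^ 2 * (1 + σ ^ 8 * ζ ^ 2) + 1 + l ^ 2 * σ ^ 12 * ζ ^ 2 +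
    2 * a * σ ^ 5 * ζ * (1 - l * σ ^ 2)

variable (m₁ m₂ m₃ l : ℝ)

/-- The partial derivative of the potential with respect to `s₃` on the configuration
`torqueFreeConfig l (σ ^ 5 * ζ) σ 1`, divided by `-σ ^ 2`. It is written in the form
`x⁻³ - y⁻³ = (y² - x²) (x² + x y + y²) / ((x + y) x³ y³)` so as to be smooth at `σ = 0`. -/
def rescaledCoupling (σ ζ : ℝ) : ℝ :=
  let x := √(outerDistSq l (m₂ / (m₂ + m₃)) σ ζ)
  let y := √(outerDistSq l (-(m₃ / (m₂ + m₃))) σ ζ)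
  m₁ * m₂ * m₃ / (m₂ + m₃) *
    ((m₂ - m₃) / (m₂ + m₃) * (1 + σ ^ 8 * ζ ^ 2) + 2 * σ ^ 3 * ζ * (1 - l * σ ^ 2)) *
    ((x ^ 2 + x * y + y ^ 2) / ((x + y) * x ^ 3 * y ^ 3))

/-- The factor that balances the centrifugal force on the inner pair in
`fderiv_Hred_torqueFreeConfig_eq_zero` for `torqueFreeConfig l (σ ^ 5 * ζ) σ 1`,
multiplied by `σ ^ 3`. -/
def rescaledInnerForce (σ ζ : ℝ) : ℝ :=
  m₂ * m₃ / √(1 + σ ^ 8 * ζ ^ 2) ^ 3 +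
    σ ^ 3 * (m₃ * m₁ * (m₂ / (m₂ + m₃)) ^ 2 / √(outerDistSq l (m₂ / (m₂ + m₃)) σ ζ) ^ 3 +
      m₁ * m₂ * (m₃ / (m₂ + m₃)) ^ 2 / √(outerDistSq l (-(m₃ / (m₂ + m₃))) σ ζ) ^ 3) +
    l * σ ^ 10 * ζ * rescaledCoupling m₁ m₂ m₃ l σ ζ

/-- The factor that balances the centrifugal force on the outer body in
`fderiv_Hred_torqueFreeConfig_eq_zero` for `torqueFreeConfig l (σ ^ 5 * ζ) σ 1`. -/
def rescaledOuterForce (σ ζ : ℝ) : ℝ :=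
  m₃ * m₁ / √(outerDistSq l (m₂ / (m₂ + m₃)) σ ζ) ^ 3 +
    m₁ * m₂ / √(outerDistSq l (-(m₃ / (m₂ + m₃))) σ ζ) ^ 3 -
    σ ^ 7 * ζ * rescaledCoupling m₁ m₂ m₃ l σ ζ

theorem outerDistSq_zero_left (a ζ : ℝ) : outerDistSq l a 0 ζ = 1 := by
  simp [outerDistSq]

theorem rescaledCoupling_zero_left (ζ : ℝ) :
    rescaledCoupling m₁ m₂ m₃ l 0 ζ =
      3 / 2 * (m₁ * m₂ * m₃ * (m₂ - m₃) / (m₂ + m₃) ^ 2) := by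
  simp only [rescaledCoupling, outerDistSq_zero_left, Real.sqrt_one]
  generalize m₂ + m₃ = M
  ring

theorem rescaledInnerForce_zero_left (ζ : ℝ) :
    rescaledInnerForce m₁ m₂ m₃ l 0 ζ = m₂ * m₃ := by
  simp [rescaledInnerForce]

theorem rescaledOuterForce_zero_left (ζ : ℝ) :
    rescaledOuterForce m₁ m₂ m₃ l 0 ζ = m₁ * (m₂ + m₃) := by
  simp only [rescaledOuterForce, outerDistSq_zero_left, Real.sqrt_one]
  ring

@[fun_prop]
theorem contDiff_outerDistSq (a : ℝ) {n : WithTop ℕ∞} :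
    ContDiff ℝ n (fun p : ℝ × ℝ => outerDistSq l a p.1 p.2) := by
  unfold outerDistSq
  fun_prop

theorem contDiffAt_rescaledCoupling (ζ : ℝ) {n : WithTop ℕ∞} :
    ContDiffAt ℝ n (fun p : ℝ × ℝ => rescaledCoupling m₁ m₂ m₃ l p.1 p.2) (0, ζ) := by
  unfold rescaledCoupling
  fun_prop (disch := simp [outerDistSq_zero_left])

theorem contDiffAt_rescaledInnerForce (ζ : ℝ) {n : WithTop ℕ∞} :
    ContDiffAt ℝ n (fun p : ℝ × ℝ => rescaledInnerForce m₁ m₂ m₃ l p.1 p.2) (0, ζ) := by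
  have hcoupling : ContDiffAt ℝ n _ _ := contDiffAt_rescaledCoupling m₁ m₂ m₃ l ζ
  unfold rescaledInnerForce
  fun_prop (disch := simp [outerDistSq_zero_left])

theorem contDiffAt_rescaledOuterForce (ζ : ℝ) {n : WithTop ℕ∞} :
    ContDiffAt ℝ n (fun p : ℝ × ℝ => rescaledOuterForce m₁ m₂ m₃ l p.1 p.2) (0, ζ) := by
  have hcoupling : ContDiffAt ℝ n _ _ := contDiffAt_rescaledCoupling m₁ m₂ m₃ l ζ
  unfold rescaledOuterForce
  fun_prop (disch := simp [outerDistSq_zero_left])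

variable {m₁ m₂ m₃ l}

theorem outerDistSq_pos (hl : 0 ≤ l) (a : ℝ) {σ : ℝ} (hσ : σ ≠ 0) (ζ : ℝ) :
    0 < outerDistSq l a σ ζ := by
  have hsq : outerDistSq l a σ ζ =
      (σ * (a - l * (σ ^ 5 * ζ))) ^ 2 + (a * (σ ^ 5 * ζ) + 1) ^ 2 := by
    rw [outerDistSq]
    ring
  rw [hsq]
  rcases eq_or_ne (a * (σ ^ 5 * ζ) + 1) 0 with h | h
  · have : a - l * (σ ^ 5 * ζ) ≠ 0 := fun h' => by
      have hzero : l * (σ ^ 5 * ζ) ^ 2 + 1 = 0 := by linear_combination h - σ ^ 5 * ζ * h'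
      exact (by positivity : l * (σ ^ 5 * ζ) ^ 2 + 1 ≠ 0) hzero
    positivity
  · positivity

theorem rotationInvariants_rescaled (l σ ζ : ℝ) :
    rotationInvariants (torqueFreeConfig l (σ ^ 5 * ζ) σ 1) =
      ![σ ^ 2 * (1 + σ ^ 8 * ζ ^ 2), 1 + l ^ 2 * σ ^ 12 * ζ ^ 2,
        σ ^ 5 * ζ * (1 - l * σ ^ 2)] := by
  funext i
  match i with
  | 0 | 1 | 2 =>
    simp only [rotationInvariants, torqueFreeConfig, Matrix.cons_val]
    ring

section Gradient

variable {σ : ℝ}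

theorem newtonGrad_rescaled (m₁ m₂ m₃ l ζ : ℝ) (hσ : 0 < σ) :
    newtonGrad m₁ m₂ m₃ (rotationInvariants (torqueFreeConfig l (σ ^ 5 * ζ) σ 1)) =
      let a₂ := m₂ / (m₂ + m₃)
      let a₃ := m₃ / (m₂ + m₃)
      let x := √(outerDistSq l a₂ σ ζ)
      let y := √(outerDistSq l (-a₃) σ ζ)
      ![(m₂ * m₃ / (σ * √(1 + σ ^ 8 * ζ ^ 2)) ^ 3 + m₃ * m₁ * a₂ ^ 2 / x ^ 3 +
          m₁ * m₂ * a₃ ^ 2 / y ^ 3) / 2,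
        (m₃ * m₁ / x ^ 3 + m₁ * m₂ / y ^ 3) / 2,
        m₃ * m₁ * a₂ / x ^ 3 - m₁ * m₂ * a₃ / y ^ 3] := by
  have h₁₃ (a : ℝ) : a ^ 2 * (σ ^ 2 * (1 + σ ^ 8 * ζ ^ 2)) + (1 + l ^ 2 * σ ^ 12 * ζ ^ 2) +
      2 * a * (σ ^ 5 * ζ * (1 - l * σ ^ 2)) = outerDistSq l a σ ζ := by
    rw [outerDistSq]
    ring
  have h₁₂ (a : ℝ) : a ^ 2 * (σ ^ 2 * (1 + σ ^ 8 * ζ ^ 2)) + (1 + l ^ 2 * σ ^ 12 * ζ ^ 2) -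
      2 * a * (σ ^ 5 * ζ * (1 - l * σ ^ 2)) = outerDistSq l (-a) σ ζ := by
    rw [outerDistSq]
    ring
  simp only [newtonGrad, rotationInvariants_rescaled, Matrix.cons_val, h₁₃, h₁₂,
    Real.sqrt_mul (sq_nonneg σ), Real.sqrt_sq hσ.le]

theorem newtonGrad_rescaled_two (hl : 0 ≤ l) (hm : m₂ + m₃ ≠ 0) (hσ : 0 < σ) (ζ : ℝ) :
    newtonGrad m₁ m₂ m₃ (rotationInvariants (torqueFreeConfig l (σ ^ 5 * ζ) σ 1)) 2 =
      -(σ ^ 2 * rescaledCoupling m₁ m₂ m₃ l σ ζ) := by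
  have hx_pos := outerDistSq_pos hl (m₂ / (m₂ + m₃)) hσ.ne' ζ
  have hy_pos := outerDistSq_pos hl (-(m₃ / (m₂ + m₃))) hσ.ne' ζ
  have hdiff : √(outerDistSq l (m₂ / (m₂ + m₃)) σ ζ) ^ 2 -
      √(outerDistSq l (-(m₃ / (m₂ + m₃))) σ ζ) ^ 2 = σ ^ 2 *
        ((m₂ - m₃) / (m₂ + m₃) * (1 + σ ^ 8 * ζ ^ 2) + 2 * σ ^ 3 * ζ * (1 - l * σ ^ 2)) := by
    rw [Real.sq_sqrt hx_pos.le, Real.sq_sqrt hy_pos.le, outerDistSq, outerDistSq]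
    field_simp
    ring
  rw [newtonGrad_rescaled m₁ m₂ m₃ l ζ hσ]
  simp only [rescaledCoupling, Matrix.cons_val]
  set x := √(outerDistSq l (m₂ / (m₂ + m₃)) σ ζ)
  set y := √(outerDistSq l (-(m₃ / (m₂ + m₃))) σ ζ)
  have hx : 0 < x := Real.sqrt_pos.mpr hx_pos
  have hy : 0 < y := Real.sqrt_pos.mpr hy_pos
  calc m₃ * m₁ * (m₂ / (m₂ + m₃)) / x ^ 3 - m₁ * m₂ * (m₃ / (m₂ + m₃)) / y ^ 3
      = -(m₁ * m₂ * m₃ / (m₂ + m₃) * (x ^ 2 - y ^ 2) *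
          ((x ^ 2 + x * y + y ^ 2) / ((x + y) * x ^ 3 * y ^ 3))) := by
        field_simp
        ring
    _ = _ := by
        rw [hdiff]
        ring

theorem rescaledInnerForce_eq (hl : 0 ≤ l) (hm : m₂ + m₃ ≠ 0) (hσ : 0 < σ) (ζ : ℝ) {g : Fin 3 → ℝ}
    (hg : g = newtonGrad m₁ m₂ m₃ (rotationInvariants (torqueFreeConfig l (σ ^ 5 * ζ) σ 1))) :
    rescaledInnerForce m₁ m₂ m₃ l σ ζ = σ ^ 3 * (2 * g 0 - l * (σ ^ 5 * ζ) * g 2) := by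
  rw [hg, newtonGrad_rescaled_two hl hm hσ, newtonGrad_rescaled m₁ m₂ m₃ l ζ hσ]
  simp only [rescaledInnerForce, Matrix.cons_val_zero]
  field_simp
  ring

theorem rescaledOuterForce_eq (hl : 0 ≤ l) (hm : m₂ + m₃ ≠ 0) (hσ : 0 < σ) (ζ : ℝ) {g : Fin 3 → ℝ}
    (hg : g = newtonGrad m₁ m₂ m₃ (rotationInvariants (torqueFreeConfig l (σ ^ 5 * ζ) σ 1))) :
    rescaledOuterForce m₁ m₂ m₃ l σ ζ = 2 * g 1 + σ ^ 5 * ζ * g 2 := by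
  rw [hg, newtonGrad_rescaled_two hl hm hσ, newtonGrad_rescaled m₁ m₂ m₃ l ζ hσ]
  simp only [rescaledOuterForce, Matrix.cons_val_one, Matrix.cons_val_zero]
  ring

end Gradient

theorem hasPartialDerivsAt_Vnewt_rescaled (hl : 0 ≤ l) {σ q₄ : ℝ} (hσ : 0 < σ) (hq₄ : 0 < q₄)
    (ζ : ℝ) :
    HasPartialDerivsAt (Vnewt m₁ m₂ m₃)
      ((q₄ ^ 3)⁻¹ •
        newtonGrad m₁ m₂ m₃ (rotationInvariants (torqueFreeConfig l (σ ^ 5 * ζ) σ 1)))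
      (rotationInvariants (torqueFreeConfig l (σ ^ 5 * ζ) (σ * q₄) q₄)) := by
  rw [← newtonGrad_sq_smul _ _ _ hq₄, rotationInvariants_torqueFreeConfig_mul,
    rotationInvariants_rescaled]
  apply hasPartialDerivsAt_Vnewt
  · simp only [Pi.smul_apply, smul_eq_mul, Matrix.cons_val_zero]
    positivity
  · have h := mul_pos (pow_pos hq₄ 2) (outerDistSq_pos hl (m₂ / (m₂ + m₃)) hσ.ne' ζ)
    rw [outerDistSq] at h
    simp only [Pi.smul_apply, smul_eq_mul, Matrix.cons_val]
    linear_combination h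
  · have h := mul_pos (pow_pos hq₄ 2) (outerDistSq_pos hl (-(m₃ / (m₂ + m₃))) hσ.ne' ζ)
    rw [outerDistSq] at h
    simp only [Pi.smul_apply, smul_eq_mul, Matrix.cons_val]
    linear_combination h

theorem fderiv_Hred_Vnewt_eq_zero {ν₁ ν₂ μ₁ μ₂ σ ζ q₄ : ℝ} (hm : m₂ + m₃ ≠ 0) (hν₁ : 0 < ν₁)
    (hν₂ : 0 < ν₂) (hμ : |μ₂| < μ₁) (hσ : 0 < σ) (hq₄ : 0 < q₄)
    (hinner : μ₂ ^ 2 / ν₁ = q₄ * σ * (1 + ν₁ / ν₂ * (σ ^ 5 * ζ) ^ 2) ^ 2 *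
      rescaledInnerForce m₁ m₂ m₃ (ν₁ / ν₂) σ ζ)
    (houter : μ₁ ^ 2 / ν₂ = q₄ * (1 + ν₁ / ν₂ * (σ ^ 5 * ζ) ^ 2) ^ 2 *
      rescaledOuterForce m₁ m₂ m₃ (ν₁ / ν₂) σ ζ)
    (hshape : ζ * (rescaledInnerForce m₁ m₂ m₃ (ν₁ / ν₂) σ ζ -
        ν₁ / ν₂ * σ ^ 3 * rescaledOuterForce m₁ m₂ m₃ (ν₁ / ν₂) σ ζ) =
      (1 + ν₁ / ν₂ * (σ ^ 5 * ζ) ^ 2) * rescaledCoupling m₁ m₂ m₃ (ν₁ / ν₂) σ ζ) :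
    fderiv ℝ (Hred ν₁ ν₂ μ₁ μ₂ (Vnewt m₁ m₂ m₃))
      (torqueFreeConfig (ν₁ / ν₂) (σ ^ 5 * ζ) (σ * q₄) q₄, 0) = 0 := by
  have hl : 0 ≤ ν₁ / ν₂ := by positivity
  set g := newtonGrad m₁ m₂ m₃
    (rotationInvariants (torqueFreeConfig (ν₁ / ν₂) (σ ^ 5 * ζ) σ 1)) with hg
  have hcoupling := newtonGrad_rescaled_two (m₁ := m₁) hl hm hσ ζ
  rw [← hg] at hcoupling
  rw [rescaledInnerForce_eq hl hm hσ ζ hg] at hinner hshape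
  rw [rescaledOuterForce_eq hl hm hσ ζ hg] at houter hshape
  refine fderiv_Hred_torqueFreeConfig_eq_zero hν₁ hν₂ hμ (by positivity) hq₄.ne'
    (hasPartialDerivsAt_Vnewt_rescaled hl hσ hq₄ ζ) ?_ ?_ ?_
  · rw [hinner, ← hg]
    simp only [Pi.smul_apply, smul_eq_mul]
    field_simp
  · rw [houter, ← hg]
    simp only [Pi.smul_apply, smul_eq_mul]
    field_simp
  · have hshape' : g 2 + 2 * (σ ^ 5 * ζ) * g 0 =
        ν₁ / ν₂ * (σ ^ 5 * ζ) * (2 * g 1 + σ ^ 5 * ζ * g 2) := by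
      refine mul_left_cancel₀ (pow_ne_zero 2 hσ.ne') ?_
      linear_combination σ ^ 4 * hshape + (1 + ν₁ / ν₂ * (σ ^ 5 * ζ) ^ 2) * σ ^ 2 * hcoupling
    rw [← hg]
    simp only [Pi.smul_apply, smul_eq_mul]
    linear_combination (q₄ ^ 3)⁻¹ * hshape'

end Rescaled

section SmallRatio

/-- The map whose fixed points `(s, ζ)` solve the equilibrium equations of
`fderiv_Hred_Vnewt_eq_zero` with `σ = ε * s`, once `q₄` is eliminated. The first component is the
quotient of the two radial equations, the second one is the shape equation solved for `ζ`. -/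
def equilibriumMap (m₁ m₂ m₃ l ε : ℝ) (v : ℝ × ℝ) : ℝ × ℝ :=
  let σ := ε * v.1
  let inner := rescaledInnerForce m₁ m₂ m₃ l σ v.2
  let outer := rescaledOuterForce m₁ m₂ m₃ l σ v.2
  (m₂ * m₃ / (m₁ * (m₂ + m₃)) * (outer / inner),
    (1 + l * (σ ^ 5 * v.2) ^ 2) * rescaledCoupling m₁ m₂ m₃ l σ v.2 /
      (inner - l * σ ^ 3 * outer))

/-- The value of `q₄` that solves the outer radial equation of `fderiv_Hred_Vnewt_eq_zero`, for
`μ₁ ^ 2 / ν₂ = 1`. -/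
def outerRadius (m₁ m₂ m₃ l σ ζ : ℝ) : ℝ :=
  ((1 + l * (σ ^ 5 * ζ) ^ 2) ^ 2 * rescaledOuterForce m₁ m₂ m₃ l σ ζ)⁻¹

variable {m₁ m₂ m₃ : ℝ}

theorem equilibriumMap_zero (hm₁ : m₁ ≠ 0) (hm₂ : m₂ ≠ 0) (hm₃ : m₃ ≠ 0) (hm : m₂ + m₃ ≠ 0)
    (l : ℝ) (v : ℝ × ℝ) :
    equilibriumMap m₁ m₂ m₃ l 0 v = (1, 3 / 2 * m₁ * (m₂ - m₃) / (m₂ + m₃) ^ 2) := by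
  simp only [equilibriumMap, zero_mul, rescaledInnerForce_zero_left, rescaledOuterForce_zero_left,
    rescaledCoupling_zero_left]
  ext <;> field_simp
  ring

theorem contDiffAt_equilibriumMap (m₁ : ℝ) (hm₂ : m₂ ≠ 0) (hm₃ : m₃ ≠ 0) (l : ℝ) (v : ℝ × ℝ)
    {n : WithTop ℕ∞} :
    ContDiffAt ℝ n (fun p : ℝ × ℝ × ℝ => equilibriumMap m₁ m₂ m₃ l p.1 p.2) (0, v) := by
  have hσ : ContDiffAt ℝ n (fun p : ℝ × ℝ × ℝ => (p.1 * p.2.1, p.2.2)) (0, v) := by fun_prop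
  have hcomp {f : ℝ × ℝ → ℝ} (hf : ContDiffAt ℝ n f (0, v.2)) :
      ContDiffAt ℝ n (fun p : ℝ × ℝ × ℝ => f (p.1 * p.2.1, p.2.2)) (0, v) :=
    ContDiffAt.comp (0, v) (by simpa only [zero_mul] using hf) hσ
  have hcoupling : ContDiffAt ℝ n
      (fun p : ℝ × ℝ × ℝ => rescaledCoupling m₁ m₂ m₃ l (p.1 * p.2.1) p.2.2) (0, v) :=
    hcomp (contDiffAt_rescaledCoupling m₁ m₂ m₃ l v.2)
  have hinner : ContDiffAt ℝ n
      (fun p : ℝ × ℝ × ℝ => rescaledInnerForce m₁ m₂ m₃ l (p.1 * p.2.1) p.2.2) (0, v) :=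
    hcomp (contDiffAt_rescaledInnerForce m₁ m₂ m₃ l v.2)
  have houter : ContDiffAt ℝ n
      (fun p : ℝ × ℝ × ℝ => rescaledOuterForce m₁ m₂ m₃ l (p.1 * p.2.1) p.2.2) (0, v) :=
    hcomp (contDiffAt_rescaledOuterForce m₁ m₂ m₃ l v.2)
  simp only [equilibriumMap]
  fun_prop (disch := simp [rescaledInnerForce_zero_left, hm₂, hm₃])

theorem fderiv_Hred_Vnewt_eq_zero_of_isFixedPt {ν₁ ν₂ μ₁ μ₂ ε s ζ : ℝ} (hm : m₂ + m₃ ≠ 0)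
    (hν₁ : 0 < ν₁) (hν₂ : 0 < ν₂) (hμ : |μ₂| < μ₁) (hε : 0 < ε) (hs : 0 < s)
    (hratio : μ₂ ^ 2 / ν₁ = ε * (m₂ * m₃ / (m₁ * (m₂ + m₃))) * (μ₁ ^ 2 / ν₂))
    (hinner : rescaledInnerForce m₁ m₂ m₃ (ν₁ / ν₂) (ε * s) ζ ≠ 0)
    (houter : 0 < rescaledOuterForce m₁ m₂ m₃ (ν₁ / ν₂) (ε * s) ζ)
    (hdet : rescaledInnerForce m₁ m₂ m₃ (ν₁ / ν₂) (ε * s) ζ -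
      ν₁ / ν₂ * (ε * s) ^ 3 * rescaledOuterForce m₁ m₂ m₃ (ν₁ / ν₂) (ε * s) ζ ≠ 0)
    (hfix : equilibriumMap m₁ m₂ m₃ (ν₁ / ν₂) ε (s, ζ) = (s, ζ)) {q₄ : ℝ}
    (hq₄ : q₄ = μ₁ ^ 2 / ν₂ * outerRadius m₁ m₂ m₃ (ν₁ / ν₂) (ε * s) ζ) :
    fderiv ℝ (Hred ν₁ ν₂ μ₁ μ₂ (Vnewt m₁ m₂ m₃))
      (torqueFreeConfig (ν₁ / ν₂) ((ε * s) ^ 5 * ζ) (ε * s * q₄) q₄, 0) = 0 := by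
  have hμ₁ : 0 < μ₁ := (abs_nonneg μ₂).trans_lt hμ
  have : 0 < 1 + ν₁ / ν₂ * ((ε * s) ^ 5 * ζ) ^ 2 := by positivity
  obtain ⟨hfix_radial, hfix_shape⟩ := Prod.mk.inj hfix
  have hq₄_pos : 0 < q₄ := by
    rw [hq₄, outerRadius]
    positivity
  have houter_eq : μ₁ ^ 2 / ν₂ = q₄ * (1 + ν₁ / ν₂ * ((ε * s) ^ 5 * ζ) ^ 2) ^ 2 *
      rescaledOuterForce m₁ m₂ m₃ (ν₁ / ν₂) (ε * s) ζ := by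
    rw [hq₄, outerRadius, mul_assoc, mul_assoc, inv_mul_cancel₀ (by positivity), mul_one]
  have hinner_eq : s * rescaledInnerForce m₁ m₂ m₃ (ν₁ / ν₂) (ε * s) ζ =
      m₂ * m₃ / (m₁ * (m₂ + m₃)) * rescaledOuterForce m₁ m₂ m₃ (ν₁ / ν₂) (ε * s) ζ := by
    rw [← mul_div_assoc] at hfix_radial
    exact ((div_eq_iff hinner).mp hfix_radial).symm
  refine fderiv_Hred_Vnewt_eq_zero hm hν₁ hν₂ hμ (by positivity) hq₄_pos ?_ houter_eq
    ((eq_div_iff hdet).mp hfix_shape.symm)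
  rw [hratio, houter_eq]
  linear_combination -(ε * q₄ * (1 + ν₁ / ν₂ * ((ε * s) ^ 5 * ζ) ^ 2) ^ 2) * hinner_eq

section Limits

variable {X : Type*} {f : Filter X} {σ ζ : X → ℝ} {ζ₀ : ℝ}

theorem tendsto_rescaledInnerForce (m₁ m₂ m₃ l : ℝ) (hσ : Tendsto σ f (𝓝 0))
    (hζ : Tendsto ζ f (𝓝 ζ₀)) :
    Tendsto (fun x => rescaledInnerForce m₁ m₂ m₃ l (σ x) (ζ x)) f (𝓝 (m₂ * m₃)) := by
  rw [← rescaledInnerForce_zero_left m₁ m₂ m₃ l ζ₀]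
  have hcont : ContinuousAt (fun p : ℝ × ℝ => rescaledInnerForce m₁ m₂ m₃ l p.1 p.2) (0, ζ₀) :=
    (contDiffAt_rescaledInnerForce m₁ m₂ m₃ l ζ₀ (n := 0)).continuousAt
  exact (hcont.tendsto.comp (hσ.prodMk_nhds hζ) :)

theorem tendsto_rescaledOuterForce (m₁ m₂ m₃ l : ℝ) (hσ : Tendsto σ f (𝓝 0))
    (hζ : Tendsto ζ f (𝓝 ζ₀)) :
    Tendsto (fun x => rescaledOuterForce m₁ m₂ m₃ l (σ x) (ζ x)) f (𝓝 (m₁ * (m₂ + m₃))) := by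
  rw [← rescaledOuterForce_zero_left m₁ m₂ m₃ l ζ₀]
  have hcont : ContinuousAt (fun p : ℝ × ℝ => rescaledOuterForce m₁ m₂ m₃ l p.1 p.2) (0, ζ₀) :=
    (contDiffAt_rescaledOuterForce m₁ m₂ m₃ l ζ₀ (n := 0)).continuousAt
  exact (hcont.tendsto.comp (hσ.prodMk_nhds hζ) :)

theorem tendsto_outerRadius (hm₁ : m₁ ≠ 0) (hm : m₂ + m₃ ≠ 0) (l : ℝ) (hσ : Tendsto σ f (𝓝 0))
    (hζ : Tendsto ζ f (𝓝 ζ₀)) :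
    Tendsto (fun x => outerRadius m₁ m₂ m₃ l (σ x) (ζ x)) f (𝓝 (m₁ * (m₂ + m₃))⁻¹) := by
  have hδ := (((((hσ.pow 5).mul hζ).pow 2).const_mul l).const_add 1).pow 2
  have hinv := (hδ.mul (tendsto_rescaledOuterForce m₁ m₂ m₃ l hσ hζ)).inv₀ (by simp [hm₁, hm])
  simpa [outerRadius] using hinv

end Limits

theorem exists_isFixedPt_equilibriumMap (hm₁ : 0 < m₁) (hm₂ : 0 < m₂) (hm₃ : 0 < m₃) (l : ℝ) :
    ∃ s ζ : ℝ → ℝ, Tendsto s (𝓝 0) (𝓝 1) ∧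
      Tendsto ζ (𝓝 0) (𝓝 (3 / 2 * m₁ * (m₂ - m₃) / (m₂ + m₃) ^ 2)) ∧
      ∀ᶠ ε in 𝓝 0, equilibriumMap m₁ m₂ m₃ l ε (s ε, ζ ε) = (s ε, ζ ε) := by
  obtain ⟨ψ, hψ, hfix⟩ := exists_tendsto_fixedPoint_of_contDiffAt
    (F := fun p : ℝ × ℝ × ℝ => equilibriumMap m₁ m₂ m₃ l p.1 p.2)
    (contDiffAt_equilibriumMap m₁ hm₂.ne' hm₃.ne' l _)
    (equilibriumMap_zero hm₁.ne' hm₂.ne' hm₃.ne' (by positivity) l)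
  exact ⟨fun ε => (ψ ε).1, fun ε => (ψ ε).2, hψ.fst_nhds, hψ.snd_nhds, hfix⟩

theorem exists_rescaled_equilibria {ν₁ ν₂ : ℝ} (hm₁ : 0 < m₁) (hm₂ : 0 < m₂) (hm₃ : 0 < m₃)
    (hν₁ : 0 < ν₁) (hν₂ : 0 < ν₂) :
    ∃ Q₁ Q₂ Q₃ Q₄ : ℝ → ℝ,
      Tendsto Q₁ (𝓝 0) (𝓝 1) ∧
      Tendsto Q₂ (𝓝 0) (𝓝 (3 / 2 * m₁ * (m₂ - m₃) / (m₂ + m₃) ^ 2)) ∧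
      Tendsto Q₃ (𝓝 0) (𝓝 (-(ν₁ / ν₂ * (3 / 2 * m₁ * (m₂ - m₃) / (m₂ + m₃) ^ 2)))) ∧
      Tendsto Q₄ (𝓝 0) (𝓝 1) ∧
      ∀ᶠ ε in 𝓝[>] 0, ∀ μ₁ μ₂ : ℝ, |μ₂| < μ₁ →
        μ₂ ^ 2 / ν₁ = ε * (m₂ * m₃ / (m₁ * (m₂ + m₃))) * (μ₁ ^ 2 / ν₂) →
        let K := μ₁ ^ 2 / (ν₂ * (m₁ * (m₂ + m₃)))
        fderiv ℝ (Hred ν₁ ν₂ μ₁ μ₂ (Vnewt m₁ m₂ m₃))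
          (![K * ε * Q₁ ε, K * ε ^ 5 * Q₂ ε, K * ε ^ 6 * Q₃ ε, K * Q₄ ε], 0) = 0 := by
  have hm : 0 < m₂ + m₃ := by positivity
  have hα : 0 < m₂ * m₃ := by positivity
  have hβ : 0 < m₁ * (m₂ + m₃) := by positivity
  obtain ⟨s, ζ, hs, hζ, hfix⟩ := exists_isFixedPt_equilibriumMap hm₁ hm₂ hm₃ (ν₁ / ν₂)
  have hσ : Tendsto (fun ε => ε * s ε) (𝓝 0) (𝓝 0) := by simpa using tendsto_id.mul hs
  have hinner := tendsto_rescaledInnerForce m₁ m₂ m₃ (ν₁ / ν₂) hσ hζ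
  have houter := tendsto_rescaledOuterForce m₁ m₂ m₃ (ν₁ / ν₂) hσ hζ
  have hdet : Tendsto (fun ε => rescaledInnerForce m₁ m₂ m₃ (ν₁ / ν₂) (ε * s ε) (ζ ε) -
      ν₁ / ν₂ * (ε * s ε) ^ 3 * rescaledOuterForce m₁ m₂ m₃ (ν₁ / ν₂) (ε * s ε) (ζ ε))
      (𝓝 0) (𝓝 (m₂ * m₃)) := by
    simpa using hinner.sub (((hσ.pow 3).const_mul (ν₁ / ν₂)).mul houter)
  let Y : ℝ → ℝ := fun ε => m₁ * (m₂ + m₃) * outerRadius m₁ m₂ m₃ (ν₁ / ν₂) (ε * s ε) (ζ ε)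
  have hY : Tendsto Y (𝓝 0) (𝓝 1) := by
    rw [← mul_inv_cancel₀ hβ.ne']
    exact (tendsto_outerRadius hm₁.ne' hm.ne' (ν₁ / ν₂) hσ hζ).const_mul _
  refine ⟨fun ε => s ε * Y ε, fun ε => s ε ^ 5 * ζ ε * Y ε,
    fun ε => -(ν₁ / ν₂ * (s ε ^ 6 * ζ ε * Y ε)), Y, by simpa using hs.mul hY,
    by simpa using ((hs.pow 5).mul hζ).mul hY,
    by simpa using ((((hs.pow 6).mul hζ).mul hY).const_mul (ν₁ / ν₂)).neg, hY, ?_⟩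
  filter_upwards [self_mem_nhdsWithin, nhdsWithin_le_nhds hfix,
    nhdsWithin_le_nhds (hs.eventually_const_lt one_pos),
    nhdsWithin_le_nhds (hinner.eventually_ne hα.ne'),
    nhdsWithin_le_nhds (houter.eventually_const_lt hβ),
    nhdsWithin_le_nhds (hdet.eventually_ne hα.ne')]
    with ε hε hfixε hsε hinnerε houterε hdetε μ₁ μ₂ hμ hratio
  convert fderiv_Hred_Vnewt_eq_zero_of_isFixedPt hm.ne' hν₁ hν₂ hμ hε hsε hratio hinnerε houterε
    hdetε hfixε rfl using 3
  funext i
  match i with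
  | 0 | 1 | 2 | 3 =>
    simp only [torqueFreeConfig, Y, Matrix.cons_val]
    field_simp

end SmallRatio

/-! ### The family of equilibria -/

theorem tendsto_sq_div_div_nhdsGT_zero {a b : ℝ} (ha : a ≠ 0) (hb : b ≠ 0) :
    Tendsto (fun x => (x / a / b) ^ 2) (𝓝[>] 0) (𝓝[>] 0) := by
  have hcont : Continuous (fun x : ℝ => (x / a / b) ^ 2) := by fun_prop
  refine tendsto_nhdsWithin_iff.mpr
    ⟨by simpa using (hcont.tendsto 0).mono_left nhdsWithin_le_nhds, ?_⟩
  filter_upwards [self_mem_nhdsWithin] with x (hx : 0 < x)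
  exact Set.mem_Ioi.mpr (by positivity)

theorem exists_equilibria_of_small_angularMomentum {m₁ m₂ m₃ ν₁ ν₂ μ₁ c : ℝ} (hm₁ : 0 < m₁)
    (hm₂ : 0 < m₂) (hm₃ : 0 < m₃) (hν₁ : 0 < ν₁) (hν₂ : 0 < ν₂) (hμ₁ : 0 < μ₁)
    (hc : c ^ 2 = ν₁ / ν₂ * (m₂ * m₃ / (m₁ * (m₂ + m₃)))) :
    let K := μ₁ ^ 2 / (ν₂ * (m₁ * (m₂ + m₃)))
    let u : ℝ → ℝ := fun μ₂ => μ₂ / μ₁ / c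
    ∃ ε > 0, ∃ q₁ q₂ q₃ q₄ : ℝ → ℝ,
      (∀ μ₂ ∈ Set.Ioo (0 : ℝ) ε, fderiv ℝ (Hred ν₁ ν₂ μ₁ μ₂ (Vnewt m₁ m₂ m₃))
        (![q₁ μ₂, q₂ μ₂, q₃ μ₂, q₄ μ₂], (0 : Fin 4 → ℝ)) = 0) ∧
      Tendsto (fun μ₂ => q₁ μ₂ / (K * u μ₂ ^ 2)) (𝓝[>] 0) (𝓝 1) ∧
      Tendsto (fun μ₂ => q₄ μ₂ / K) (𝓝[>] 0) (𝓝 1) ∧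
      Tendsto (fun μ₂ => q₂ μ₂ / (K * u μ₂ ^ 10)) (𝓝[>] 0)
        (𝓝 (3 / 2 * m₁ * (m₂ - m₃) / (m₂ + m₃) ^ 2)) ∧
      Tendsto (fun μ₂ => q₃ μ₂ / (K * u μ₂ ^ 12)) (𝓝[>] 0)
        (𝓝 (-(ν₁ / ν₂ * (3 / 2 * m₁ * (m₂ - m₃) / (m₂ + m₃) ^ 2)))) := by
  intro K u
  obtain ⟨Q₁, Q₂, Q₃, Q₄, hQ₁, hQ₂, hQ₃, hQ₄, hcrit⟩ :=
    exists_rescaled_equilibria hm₁ hm₂ hm₃ hν₁ hν₂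
  have hc_ne : c ≠ 0 := pow_ne_zero_iff two_ne_zero |>.mp (hc ▸ by positivity)
  have hK : K ≠ 0 := by positivity
  have hu_ne : ∀ᶠ μ₂ in 𝓝[>] 0, u μ₂ ≠ 0 := by
    filter_upwards [self_mem_nhdsWithin] with μ₂ (hμ₂ : 0 < μ₂)
    exact div_ne_zero (by positivity) hc_ne
  have hu : Tendsto (fun μ₂ => u μ₂ ^ 2) (𝓝[>] 0) (𝓝[>] 0) :=
    tendsto_sq_div_div_nhdsGT_zero hμ₁.ne' hc_ne
  have hlim {Q : ℝ → ℝ} {a : ℝ} (hQ : Tendsto Q (𝓝 0) (𝓝 a)) (n : ℕ) :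
      Tendsto (fun μ₂ => K * u μ₂ ^ n * Q (u μ₂ ^ 2) / (K * u μ₂ ^ n)) (𝓝[>] 0) (𝓝 a) := by
    refine (hQ.comp (tendsto_nhds_of_tendsto_nhdsWithin hu)).congr' (hu_ne.mono fun μ₂ hμ₂ => ?_)
    exact (mul_div_cancel_left₀ _ (mul_ne_zero hK (pow_ne_zero n hμ₂))).symm
  obtain ⟨ε, hε, hcrit_Ioo⟩ := (nhdsGT_basis 0).eventually_iff.mp
    ((hu.eventually hcrit).and (Ioo_mem_nhdsGT hμ₁))
  refine ⟨ε, hε, _, _, _, _, fun μ₂ hμ₂ => ?_, hlim hQ₁ 2, by simpa using hlim hQ₄ 0, hlim hQ₂ 10,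
    hlim hQ₃ 12⟩
  obtain ⟨hcritμ₂, hμ₂_pos, hμ₂_lt⟩ := hcrit_Ioo hμ₂
  have hratio : μ₂ ^ 2 / ν₁ = u μ₂ ^ 2 * (m₂ * m₃ / (m₁ * (m₂ + m₃))) * (μ₁ ^ 2 / ν₂) := by
    simp only [u, div_pow, hc]
    field_simp
  simpa only [← pow_mul] using hcritμ₂ μ₁ μ₂ (by rwa [abs_of_pos hμ₂_pos]) hratio

/-- For general masses there is a family of zero-momentum critical points of the fully
reduced Hamiltonian for small `μ₂ > 0`, with the asymptotics of Lemma 8. -/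
theorem general_masses_equilibrium_family (m₁ m₂ m₃ μ₁ : ℝ) (hm₁ : 0 < m₁)
    (hm₂ : 0 < m₂) (hm₃ : 0 < m₃) (hμ₁ : 0 < μ₁) :
    (let Mtot := m₁ + m₂ + m₃
     let ν₁ := m₂ * m₃ / (m₂ + m₃)
     let ν₂ := m₁ * (m₂ + m₃) / Mtot
     let κ := Mtot / (m₁ ^ 2 * (m₂ + m₃) ^ 2)
     let u : ℝ → ℝ := fun μ₂ => (μ₂ / μ₁) / (m₂ * m₃ * Real.sqrt (κ / (m₂ + m₃)))
     ∃ ε > 0, ∃ q₁ q₂ q₃ q₄ : ℝ → ℝ,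
       (∀ μ₂ ∈ Set.Ioo (0 : ℝ) ε,
         fderiv ℝ (Hred ν₁ ν₂ μ₁ μ₂ (Vnewt m₁ m₂ m₃))
           (![q₁ μ₂, q₂ μ₂, q₃ μ₂, q₄ μ₂], (0 : Fin 4 → ℝ)) = 0) ∧
       Tendsto (fun μ₂ => q₁ μ₂ / (κ * μ₁ ^ 2 * u μ₂ ^ 2)) (𝓝[>] 0) (𝓝 1) ∧
       Tendsto (fun μ₂ => q₄ μ₂ / (κ * μ₁ ^ 2)) (𝓝[>] 0) (𝓝 1) ∧
       Tendsto (fun μ₂ => q₂ μ₂ / (κ * μ₁ ^ 2 * u μ₂ ^ 10)) (𝓝[>] 0)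
         (𝓝 ((3 / 2) * m₁ * (m₂ - m₃) / (m₂ + m₃) ^ 2)) ∧
       Tendsto (fun μ₂ => q₃ μ₂ / (κ * μ₁ ^ 2 * u μ₂ ^ 12)) (𝓝[>] 0)
         (𝓝 (-((3 / 2) * Mtot * m₂ * m₃ * (m₂ - m₃) / (m₂ + m₃) ^ 4)))) := by
  intro Mtot ν₁ ν₂ κ _
  have hK : μ₁ ^ 2 / (ν₂ * (m₁ * (m₂ + m₃))) = κ * μ₁ ^ 2 := by
    simp only [ν₂, κ, Mtot]
    field_simp
  have hc : (m₂ * m₃ * √(κ / (m₂ + m₃))) ^ 2 = ν₁ / ν₂ * (m₂ * m₃ / (m₁ * (m₂ + m₃))) := by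
    rw [mul_pow, Real.sq_sqrt (by positivity)]
    simp only [ν₁, ν₂, κ, Mtot]
    field_simp
  have hlim₃ : ν₁ / ν₂ * (3 / 2 * m₁ * (m₂ - m₃) / (m₂ + m₃) ^ 2) =
      3 / 2 * Mtot * m₂ * m₃ * (m₂ - m₃) / (m₂ + m₃) ^ 4 := by
    simp only [ν₁, ν₂]
    field_simp
  simpa only [hK, hlim₃] using exists_equilibria_of_small_angularMomentum hm₁ hm₂ hm₃
    (show 0 < ν₁ by positivity) (show 0 < ν₂ by positivity) hμ₁ hc

end
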